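/- Let (S,d) be a complete separable metric space. Then M(S) is U_b(S)-weakly sequentially complete: if (μ_n) is a sequence of finite signed Borel measures on S such that for every bounded uniformly continuous function f : S → ℝ the sequence ∫_S f dμ_n is Cauchy in ℝ, then there exists a finite signed Borel measure μ on S such that ∫_S f dμ_n → ∫_S f dμ for every bounded uniformly continuous f : S → ℝ. -/

import Mathlib

open MeasureTheory Filter Topology

/-- A function is bounded Lipschitz. -/
def IsBL {S : Type*} [PseudoMetricSpace S] (f : S → ℝ) : Prop :=
  (∃ C : ℝ, ∀ x, |f x| ≤ C) ∧ ∃ K : NNReal, LipschitzWith K f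

/-- Pairing of a finite signed Borel measure with a function, via the Jordan decomposition:
`⟨μ, f⟩ = ∫ f dμ⁺ - ∫ f dμ⁻`. -/
noncomputable def pairing {S : Type*} [MeasurableSpace S] (μ : SignedMeasure S) (f : S → ℝ) : ℝ :=
  (∫ x, f x ∂μ.toJordanDecomposition.posPart) - ∫ x, f x ∂μ.toJordanDecomposition.negPart

/-- Total variation norm of a finite signed measure: `‖μ‖_TV = |μ|(S)`. -/
noncomputable def tvNorm {S : Type*} [MeasurableSpace S] (μ : SignedMeasure S) : ℝ :=
  (μ.totalVariation Set.univ).toReal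

/-- Dual bounded Lipschitz norm:
`‖μ‖*_BL = sup { |⟨μ, f⟩| : f ∈ BL(S), ‖f‖_∞ + |f|_L ≤ 1 }`. -/
noncomputable def blDualNorm {S : Type*} [PseudoMetricSpace S] [MeasurableSpace S]
    (μ : SignedMeasure S) : ℝ :=
  sSup {r : ℝ | ∃ (f : S → ℝ) (C : ℝ) (K : NNReal), (∀ x, |f x| ≤ C) ∧
    LipschitzWith K f ∧ C + (K : ℝ) ≤ 1 ∧ r = |pairing μ f|}

/-!
By Banach–Steinhaus the total variations of the `μ n` are bounded, so along an ultrafilter the `μ n`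
converge weakly to a signed measure `σ` on the Stone–Čech compactification of `S`, and the limit
functional `L` on `U_b(S)` is integration against `σ`. It remains to see that `σ` may be restricted
to `S`. A gliding hump argument shows that `L (f m) → 0` for every uniformly equicontinuous,
`[0, 1]`-valued, pointwise null sequence `f`: otherwise one could cut the `f m` off to disjointly
supported humps, whose supremum is a single function in `U_b(S)` on which `μ n` fails to converge.
Applied to `f m = min g (c * dist(·, {u 0, …, u m}))` with `u` dense in `S`, this says that `σ`
annihilates the limit of the extended functions. By completeness, the limit of the extended
distances vanishes exactly on `S`; letting `c → ∞` gives `∫ g dσ = ∫_S g dσ`.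
-/

section Pairing

variable {X : Type*} [MeasurableSpace X]

lemma integrable_of_measurable_of_abs_le {α : Measure X} [IsFiniteMeasure α] {f : X → ℝ} {C : ℝ}
    (hf : Measurable f) (hC : ∀ x, |f x| ≤ C) : Integrable f α :=
  .of_bound hf.aestronglyMeasurable C (.of_forall hC)

lemma pairing_add {μ : SignedMeasure X} {f g : X → ℝ} (hf : Integrable f μ.totalVariation)
    (hg : Integrable g μ.totalVariation) :
    pairing μ (fun x => f x + g x) = pairing μ f + pairing μ g := by
  obtain ⟨hf_pos, hf_neg⟩ := integrable_add_measure.1 hf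
  obtain ⟨hg_pos, hg_neg⟩ := integrable_add_measure.1 hg
  simp only [pairing, integral_add hf_pos hg_pos, integral_add hf_neg hg_neg]
  ring

lemma pairing_const_mul (μ : SignedMeasure X) (c : ℝ) (f : X → ℝ) :
    pairing μ (fun x => c * f x) = c * pairing μ f := by
  simp only [pairing, integral_const_mul, mul_sub]

lemma pairing_sub {μ : SignedMeasure X} {f g : X → ℝ} (hf : Integrable f μ.totalVariation)
    (hg : Integrable g μ.totalVariation) :
    pairing μ (fun x => f x - g x) = pairing μ f - pairing μ g := by
  obtain ⟨hf_pos, hf_neg⟩ := integrable_add_measure.1 hf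
  obtain ⟨hg_pos, hg_neg⟩ := integrable_add_measure.1 hg
  simp only [pairing, integral_sub hf_pos hg_pos, integral_sub hf_neg hg_neg]
  ring

lemma pairing_finset_sum {ι : Type*} {μ : SignedMeasure X} (s : Finset ι) {f : ι → X → ℝ}
    (hf : ∀ i ∈ s, Integrable (f i) μ.totalVariation) :
    pairing μ (fun x => ∑ i ∈ s, f i x) = ∑ i ∈ s, pairing μ (f i) := by
  simp only [pairing]
  rw [integral_finsetSum s fun i hi => (integrable_add_measure.1 (hf i hi)).1,
    integral_finsetSum s fun i hi => (integrable_add_measure.1 (hf i hi)).2,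
    Finset.sum_sub_distrib]

lemma abs_pairing_le_integral {μ : SignedMeasure X} {f g : X → ℝ}
    (hg : Integrable g μ.totalVariation) (hfg : ∀ x, |f x| ≤ g x) :
    |pairing μ f| ≤ ∫ x, g x ∂μ.totalVariation := by
  obtain ⟨hg_pos, hg_neg⟩ := integrable_add_measure.1 hg
  have abs_integral_le {α : Measure X} (hα : Integrable g α) : |∫ x, f x ∂α| ≤ ∫ x, g x ∂α := by
    rw [← Real.norm_eq_abs]
    exact norm_integral_le_of_norm_le hα (.of_forall hfg)
  calc |pairing μ f|
      ≤ |∫ x, f x ∂μ.toJordanDecomposition.posPart|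
        + |∫ x, f x ∂μ.toJordanDecomposition.negPart| := abs_sub _ _
    _ ≤ (∫ x, g x ∂μ.toJordanDecomposition.posPart)
        + ∫ x, g x ∂μ.toJordanDecomposition.negPart :=
      add_le_add (abs_integral_le hg_pos) (abs_integral_le hg_neg)
    _ = ∫ x, g x ∂μ.totalVariation := (integral_add_measure hg_pos hg_neg).symm

lemma abs_pairing_le_of_abs_le_add_indicator (μ : SignedMeasure X) {f : X → ℝ} {a : ℝ} {B : Set X}
    (hB : MeasurableSet B) (hf : ∀ x, |f x| ≤ a + B.indicator 1 x) :
    |pairing μ f| ≤ a * tvNorm μ + μ.totalVariation.real B := by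
  have hB_int : Integrable (B.indicator (1 : X → ℝ)) μ.totalVariation :=
    (integrable_const (1 : ℝ)).indicator hB
  calc |pairing μ f| ≤ ∫ x, (a + B.indicator 1 x) ∂μ.totalVariation :=
        abs_pairing_le_integral ((integrable_const a).add hB_int) hf
    _ = a * tvNorm μ + μ.totalVariation.real B := by
        rw [integral_add (integrable_const a) hB_int, integral_const, integral_indicator_one hB,
          smul_eq_mul, mul_comm, tvNorm, measureReal_def]

lemma abs_pairing_le_mul_tvNorm (μ : SignedMeasure X) {f : X → ℝ} {a : ℝ} (hf : ∀ x, |f x| ≤ a) :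
    |pairing μ f| ≤ a * tvNorm μ := by
  simpa using abs_pairing_le_of_abs_le_add_indicator μ .empty (by simpa using hf)

lemma pairing_indicator_one (μ : SignedMeasure X) {B : Set X} (hB : MeasurableSet B) :
    pairing μ (B.indicator 1) = μ B := by
  rw [pairing, integral_indicator_one hB, integral_indicator_one hB,
    ← μ.apply_eq_posPart_real_sub_negPart_real hB]

lemma tendsto_pairing_of_dominated_convergence (μ : SignedMeasure X) {F : ℕ → X → ℝ} {f : X → ℝ}
    {C : ℝ} (hF : ∀ n, Measurable (F n)) (hC : ∀ n x, |F n x| ≤ C)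
    (hlim : ∀ x, Tendsto (fun n => F n x) atTop (𝓝 (f x))) :
    Tendsto (fun n => pairing μ (F n)) atTop (𝓝 (pairing μ f)) := by
  have tendsto_integral (α : Measure X) [IsFiniteMeasure α] :
      Tendsto (fun n => ∫ x, F n x ∂α) atTop (𝓝 (∫ x, f x ∂α)) :=
    tendsto_integral_of_dominated_convergence (fun _ => C) (fun n => (hF n).aestronglyMeasurable)
      (integrable_const C) (fun n => .of_forall (hC n)) (.of_forall hlim)
  exact (tendsto_integral _).sub (tendsto_integral _)

lemma pairing_toSignedMeasure_sub (α β : Measure X) [IsFiniteMeasure α] [IsFiniteMeasure β]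
    {f : X → ℝ} {C : ℝ} (hf : Measurable f) (hC : ∀ x, |f x| ≤ C) :
    pairing (α.toSignedMeasure - β.toSignedMeasure) f = (∫ x, f x ∂α) - ∫ x, f x ∂β := by
  set σ := α.toSignedMeasure - β.toSignedMeasure with hσ
  set P := σ.toJordanDecomposition.posPart with hP
  set N := σ.toJordanDecomposition.negPart with hN
  have sums_eq : P + β = α + N := by
    ext s hs
    have hσs : P.real s - N.real s = α.real s - β.real s := by
      rw [← σ.apply_eq_posPart_real_sub_negPart_real hs, hσ, Measure.toSignedMeasure_sub_apply hs]
    rw [← measureReal_eq_measureReal_iff, measureReal_add_apply, measureReal_add_apply]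
    linarith
  have hint (γ : Measure X) [IsFiniteMeasure γ] : Integrable f γ :=
    integrable_of_measurable_of_abs_le hf hC
  have integrals_eq := congrArg (fun γ => ∫ x, f x ∂γ) sums_eq
  simp only [integral_add_measure (hint _) (hint _)] at integrals_eq
  rw [pairing, ← hP, ← hN]
  linarith

lemma pairing_sub_left (μ ν : SignedMeasure X) {f : X → ℝ} {C : ℝ} (hf : Measurable f)
    (hC : ∀ x, |f x| ≤ C) : pairing (μ - ν) f = pairing μ f - pairing ν f := by
  set j := μ.toJordanDecomposition with hj
  set k := ν.toJordanDecomposition with hk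
  have hint (γ : Measure X) [IsFiniteMeasure γ] : Integrable f γ :=
    integrable_of_measurable_of_abs_le hf hC
  have sub_eq : μ - ν = (j.posPart + k.negPart).toSignedMeasure
      - (j.negPart + k.posPart).toSignedMeasure := by
    rw [← μ.toSignedMeasure_toJordanDecomposition, ← ν.toSignedMeasure_toJordanDecomposition,
      JordanDecomposition.toSignedMeasure, JordanDecomposition.toSignedMeasure, ← hj, ← hk,
      Measure.toSignedMeasure_add, Measure.toSignedMeasure_add]
    abel
  rw [sub_eq, pairing_toSignedMeasure_sub _ _ hf hC, integral_add_measure (hint _) (hint _),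
    integral_add_measure (hint _) (hint _), pairing, pairing, ← hj, ← hk]
  ring

lemma pairing_neg_left (μ : SignedMeasure X) (f : X → ℝ) : pairing (-μ) f = -pairing μ f := by
  simp only [pairing, SignedMeasure.toJordanDecomposition_neg, JordanDecomposition.neg_posPart,
    JordanDecomposition.neg_negPart, neg_sub]

lemma exists_pairing_comp_eq_pairing_indicator_range {Y : Type*} [MeasurableSpace Y] {e : X → Y}
    (he : MeasurableEmbedding e) (σ : SignedMeasure Y) :
    ∃ ν : SignedMeasure X, ∀ (φ : Y → ℝ) (C : ℝ), Measurable φ → (∀ y, |φ y| ≤ C) →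
      pairing ν (φ ∘ e) = pairing σ ((Set.range e).indicator φ) := by
  have integral_comap (α : Measure Y) (φ : Y → ℝ) :
      ∫ x, φ (e x) ∂α.comap e = ∫ y, (Set.range e).indicator φ y ∂α := by
    rw [← he.integral_map, he.map_comap, integral_indicator he.measurableSet_range]
  refine ⟨(σ.toJordanDecomposition.posPart.comap e).toSignedMeasure
    - (σ.toJordanDecomposition.negPart.comap e).toSignedMeasure, fun φ C hφ hC => ?_⟩
  rw [pairing_toSignedMeasure_sub _ _ (hφ.comp he.measurable) fun x => hC (e x), pairing]
  simp only [Function.comp_apply, integral_comap]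

end Pairing

section UniformBoundedness

lemma exists_forall_mem_norm_le_of_isClosed {𝕜 E F ι : Type*} [NontriviallyNormedField 𝕜]
    [NormedAddCommGroup E] [NormedSpace 𝕜 E] [CompleteSpace E] [SeminormedAddCommGroup F]
    [NormedSpace 𝕜 F] {p : Submodule 𝕜 E} (hp : IsClosed (p : Set E)) {T : ι → E →L[𝕜] F}
    (hT : ∀ f ∈ p, ∃ C, ∀ i, ‖T i f‖ ≤ C) : ∃ C, ∀ i, ∀ f ∈ p, ‖T i f‖ ≤ C * ‖f‖ := by
  have : CompleteSpace p := hp.completeSpace_coe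
  obtain ⟨C, hC⟩ := banach_steinhaus (g := fun i => (T i).comp p.subtypeL) fun f => hT f f.2
  exact ⟨C, fun i f hf => ((T i).comp p.subtypeL).le_of_opNorm_le (hC i) ⟨f, hf⟩⟩

variable {S : Type*} [PseudoMetricSpace S]

/-- `U_b(S)`, as a subspace of the Banach space of bounded continuous functions. -/
def Ub (S : Type*) [PseudoMetricSpace S] : Submodule ℝ (BoundedContinuousFunction S ℝ) where
  carrier := {f | UniformContinuous f}
  zero_mem' := uniformContinuous_const
  add_mem' hf hg := hf.add hg
  smul_mem' c _ hf := uniformContinuous_const_smul c |>.comp hf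

lemma isClosed_Ub : IsClosed (Ub S : Set (BoundedContinuousFunction S ℝ)) := by
  refine isClosed_of_closure_subset fun f hf => ?_
  obtain ⟨F, hF, hlim⟩ := mem_closure_iff_seq_limit.1 hf
  exact (BoundedContinuousFunction.tendsto_iff_tendstoUniformly.1 hlim).uniformContinuous
    (Eventually.of_forall hF).frequently

variable [MeasurableSpace S] [BorelSpace S]

/-- The pairing with `μ`, as a continuous linear functional on bounded continuous functions. -/
noncomputable def pairingCLM (μ : SignedMeasure S) : BoundedContinuousFunction S ℝ →L[ℝ] ℝ :=
  LinearMap.mkContinuous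
    { toFun := fun f => pairing μ f
      map_add' := fun f g => pairing_add (f.integrable _) (g.integrable _)
      map_smul' := fun c f => pairing_const_mul μ c f }
    (tvNorm μ) fun f => by
      rw [mul_comm]
      exact abs_pairing_le_mul_tvNorm μ f.norm_coe_le_norm

lemma abs_apply_le_of_abs_pairing_le {σ : SignedMeasure S} {C : ℝ}
    (hσ : ∀ f : S → ℝ, UniformContinuous f → (∀ x, |f x| ≤ 1) → |pairing σ f| ≤ C) {F : Set S}
    (hF : IsClosed F) : |σ F| ≤ C := by
  have radius_pos (n : ℕ) : 0 < 1 / ((n : ℝ) + 1) := by positivity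
  let χ (n : ℕ) (x : S) : ℝ := thickenedIndicator (radius_pos n) F x
  have χ_lipschitz (n : ℕ) : LipschitzWith _ (χ n) :=
    NNReal.isometry_coe.lipschitz.comp (lipschitzWith_thickenedIndicator (radius_pos n) F)
  have χ_le_one (n : ℕ) (x : S) : |χ n x| ≤ 1 := by
    rw [NNReal.abs_eq]
    exact_mod_cast thickenedIndicator_le_one (radius_pos n) F x
  have χ_tendsto (x : S) : Tendsto (fun n => χ n x) atTop (𝓝 (F.indicator 1 x)) := by
    have h := tendsto_pi_nhds.1 (thickenedIndicator_tendsto_indicator_closure radius_pos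
      tendsto_one_div_add_atTop_nhds_zero_nat F) x
    have coe_indicator : F.indicator (1 : S → ℝ) x = (F.indicator (fun _ => 1) x : NNReal) := by
      by_cases hx : x ∈ F <;> simp [hx]
    rw [hF.closure_eq] at h
    exact coe_indicator ▸ (NNReal.continuous_coe.tendsto _).comp h
  rw [← pairing_indicator_one σ hF.measurableSet]
  exact le_of_tendsto' (tendsto_pairing_of_dominated_convergence σ
    (fun n => (χ_lipschitz n).continuous.measurable) χ_le_one χ_tendsto).abs
    fun n => hσ _ (χ_lipschitz n).uniformContinuous (χ_le_one n)

lemma measureReal_posPart_univ_le_of_abs_pairing_le {σ : SignedMeasure S} {C : ℝ}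
    (hσ : ∀ f : S → ℝ, UniformContinuous f → (∀ x, |f x| ≤ 1) → |pairing σ f| ≤ C) :
    σ.toJordanDecomposition.posPart.real Set.univ ≤ C := by
  obtain ⟨A, hA, hA_pos, hA_neg⟩ := σ.toJordanDecomposition.mutuallySingular
  set P := σ.toJordanDecomposition.posPart
  have hC : 0 ≤ C := (abs_nonneg _).trans (hσ 0 uniformContinuous_const (by simp))
  have posPart_univ : P Set.univ = P Aᶜ := by rw [← measure_add_measure_compl hA, hA_pos, zero_add]
  refine ENNReal.toReal_le_of_le_ofReal hC (posPart_univ.trans_le (le_of_not_gt fun hlt => ?_))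
  obtain ⟨F, hFA, hF, hCF⟩ := hA.compl.exists_lt_isClosed_of_ne_top (measure_ne_top P _) hlt
  have negPart_zero : σ.toJordanDecomposition.negPart.real F = 0 := by
    rw [measureReal_def, measure_mono_null hFA hA_neg, ENNReal.toReal_zero]
  have apply_eq : σ F = P.real F := by
    rw [σ.apply_eq_posPart_real_sub_negPart_real hF.measurableSet, negPart_zero, sub_zero]
  refine ((ENNReal.ofReal_lt_iff_lt_toReal hC (measure_ne_top P F)).1 hCF).not_ge ?_
  rw [← measureReal_def, ← apply_eq]
  exact (le_abs_self _).trans (abs_apply_le_of_abs_pairing_le hσ hF)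

lemma tvNorm_le_of_abs_pairing_le {σ : SignedMeasure S} {C : ℝ}
    (hσ : ∀ f : S → ℝ, UniformContinuous f → (∀ x, |f x| ≤ 1) → |pairing σ f| ≤ C) :
    tvNorm σ ≤ 2 * C := by
  have hσ_neg := measureReal_posPart_univ_le_of_abs_pairing_le (σ := -σ) fun f hf hf1 => by
    rw [pairing_neg_left, abs_neg]
    exact hσ f hf hf1
  rw [SignedMeasure.toJordanDecomposition_neg, JordanDecomposition.neg_posPart] at hσ_neg
  rw [tvNorm, ← measureReal_def, SignedMeasure.totalVariation, measureReal_add_apply]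
  linarith [measureReal_posPart_univ_le_of_abs_pairing_le hσ]

lemma exists_tvNorm_le_of_pairing_bounded {ι : Type*} {μ : ι → SignedMeasure S}
    (hμ : ∀ f : S → ℝ, UniformContinuous f → (∃ C, ∀ x, |f x| ≤ C) →
      ∃ C, ∀ i, |pairing (μ i) f| ≤ C) :
    ∃ M, ∀ i, tvNorm (μ i) ≤ M := by
  obtain ⟨C, hC⟩ := exists_forall_mem_norm_le_of_isClosed isClosed_Ub
    (T := fun i => pairingCLM (μ i)) fun f hf => hμ f hf ⟨‖f‖, f.norm_coe_le_norm⟩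
  refine ⟨2 * max C 0, fun i => tvNorm_le_of_abs_pairing_le fun f hf hf1 => ?_⟩
  let F : BoundedContinuousFunction S ℝ := .ofNormedAddCommGroup f hf.continuous 1 hf1
  have hF : ‖F‖ ≤ 1 := BoundedContinuousFunction.norm_ofNormedAddCommGroup_le _ zero_le_one hf1
  calc |pairing (μ i) f| ≤ C * ‖F‖ := hC i F hf
    _ ≤ max C 0 * 1 := mul_le_mul (le_max_left C 0) hF (norm_nonneg F) (le_max_right C 0)
    _ = max C 0 := mul_one _

end UniformBoundedness

section Equicontinuity

variable {S ι : Type*} [PseudoMetricSpace S]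

lemma uniformEquicontinuous_uniformContinuous_comp₂ {f g : ι → S → ℝ} {G : ℝ × ℝ → ℝ}
    (hG : UniformContinuous G) (hf : UniformEquicontinuous f) (hg : UniformEquicontinuous g) :
    UniformEquicontinuous fun i x => G (f i x, g i x) := by
  rw [Metric.uniformEquicontinuous_iff] at hf hg ⊢
  intro ε hε
  obtain ⟨r, hr, hGr⟩ := Metric.uniformContinuous_iff.1 hG ε hε
  obtain ⟨δf, hδf, hfδ⟩ := hf r hr
  obtain ⟨δg, hδg, hgδ⟩ := hg r hr
  exact ⟨min δf δg, lt_min hδf hδg, fun x y hxy i =>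
    hGr (max_lt (hfδ x y (hxy.trans_le (min_le_left _ _)) i)
      (hgδ x y (hxy.trans_le (min_le_right _ _)) i))⟩

lemma uniformContinuous_min : UniformContinuous fun p : ℝ × ℝ => min p.1 p.2 :=
  (LipschitzWith.prod_fst.min LipschitzWith.prod_snd).uniformContinuous

lemma uniformEquicontinuous_infDist (s : ι → Set S) :
    UniformEquicontinuous fun i x => Metric.infDist x (s i) :=
  LipschitzWith.uniformEquicontinuous _ 1 fun i => Metric.lipschitz_infDist_pt (s i)

lemma iSup_le_iSup_add_of_abs_sub_le [Nonempty ι] {a b : ι → ℝ} {r : ℝ}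
    (hb : BddAbove (Set.range b)) (hab : ∀ i, |a i - b i| ≤ r) : ⨆ i, a i ≤ (⨆ i, b i) + r :=
  ciSup_le fun i => by linarith [le_abs_self (a i - b i), hab i, le_ciSup hb i]

lemma uniformContinuous_iSup_of_uniformEquicontinuous [Nonempty ι] {h : ι → S → ℝ}
    (hh : UniformEquicontinuous h) (hbdd : ∀ x, BddAbove (Set.range fun i => h i x)) :
    UniformContinuous fun x => ⨆ i, h i x := by
  rw [Metric.uniformContinuous_iff]
  intro ε hε
  obtain ⟨δ, hδ, hhδ⟩ := Metric.uniformEquicontinuous_iff.1 hh (ε / 2) (half_pos hε)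
  refine ⟨δ, hδ, fun x y hxy => ?_⟩
  have iSup_le {x y : S} (hxy : dist x y < δ) : ⨆ i, h i x ≤ (⨆ i, h i y) + ε / 2 :=
    iSup_le_iSup_add_of_abs_sub_le (hbdd y) fun i => (hhδ x y hxy i).le
  rw [Real.dist_eq, abs_sub_lt_iff]
  constructor <;> linarith [iSup_le hxy, iSup_le (dist_comm x y ▸ hxy)]

lemma tendsto_infDist_image_Iic {u : ℕ → S} (hu : DenseRange u) (x : S) :
    Tendsto (fun n => Metric.infDist x (u '' Set.Iic n)) atTop (𝓝 0) := by
  refine Metric.tendsto_atTop.2 fun ε hε => ?_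
  obtain ⟨m, hm⟩ := hu.exists_dist_lt x hε
  refine ⟨m, fun n hn => ?_⟩
  rw [Real.dist_0_eq_abs, abs_of_nonneg Metric.infDist_nonneg]
  exact (Metric.infDist_le_dist_of_mem (Set.mem_image_of_mem u (Set.mem_Iic.2 hn))).trans_lt hm

end Equicontinuity

section Humps

variable {S : Type*} [PseudoMetricSpace S]

/-- A sequence as in the gliding hump argument: uniformly equicontinuous, with values in `[0, 1]`,
and pointwise null. -/
structure IsEquicontinuousNull (f : ℕ → S → ℝ) : Prop where
  uniformEquicontinuous : UniformEquicontinuous f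
  mem_Icc : ∀ n x, f n x ∈ Set.Icc 0 1
  tendsto : ∀ x, Tendsto (fun n => f n x) atTop (𝓝 0)

namespace IsEquicontinuousNull

variable {f : ℕ → S → ℝ}

lemma comp (hf : IsEquicontinuousNull f) {φ : ℕ → ℕ} (hφ : Tendsto φ atTop atTop) :
    IsEquicontinuousNull (f ∘ φ) where
  uniformEquicontinuous := hf.uniformEquicontinuous.comp φ
  mem_Icc n := hf.mem_Icc (φ n)
  tendsto x := (hf.tendsto x).comp hφ

lemma abs_le_one (hf : IsEquicontinuousNull f) (n : ℕ) (x : S) : |f n x| ≤ 1 :=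
  (abs_of_nonneg (hf.mem_Icc n x).1).trans_le (hf.mem_Icc n x).2

lemma measurable [MeasurableSpace S] [OpensMeasurableSpace S] (hf : IsEquicontinuousNull f)
    (n : ℕ) : Measurable (f n) :=
  (hf.uniformEquicontinuous.uniformContinuous n).continuous.measurable

end IsEquicontinuousNull

/-- The function `(f - 2η)⁺` cut off linearly between the distances `δ` and `2δ` from `T`. -/
noncomputable def hump (η δ : ℝ) (T : Set S) (f : S → ℝ) (x : S) : ℝ :=
  max 0 (min (f x - 2 * η) (2 - Metric.infDist x T / δ))

variable {η δ : ℝ} {T : Set S} {f : S → ℝ} {x : S}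

lemma hump_mem_Icc (hη : 0 ≤ η) (hf : f x ≤ 1) : hump η δ T f x ∈ Set.Icc 0 1 :=
  ⟨le_max_left _ _, max_le zero_le_one ((min_le_left _ _).trans (by linarith))⟩

lemma hump_eq_zero_of_le (hf : f x ≤ 2 * η) : hump η δ T f x = 0 :=
  max_eq_left ((min_le_left _ _).trans (by linarith))

lemma hump_eq_zero_of_le_infDist (hδ : 0 < δ) (hx : 2 * δ ≤ Metric.infDist x T) :
    hump η δ T f x = 0 :=
  max_eq_left ((min_le_right _ _).trans (sub_nonpos.2 ((le_div_iff₀ hδ).2 hx)))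

lemma abs_sub_hump_le (hη : 0 ≤ η) (hδ : 0 < δ) (hf : f x ∈ Set.Icc 0 1) :
    |f x - hump η δ T f x| ≤ 2 * η + {x | δ < Metric.infDist x T}.indicator 1 x := by
  obtain ⟨hf0, hf1⟩ := hf
  by_cases hx : x ∈ {x | δ < Metric.infDist x T}
  · obtain ⟨h0, h1⟩ := hump_mem_Icc (δ := δ) (T := T) hη hf1
    rw [Set.indicator_of_mem hx, Pi.one_apply, abs_le]
    constructor <;> linarith
  · have cutoff : 1 ≤ 2 - Metric.infDist x T / δ := by
      linarith [(div_le_one hδ).2 (not_lt.1 (show ¬δ < Metric.infDist x T from hx))]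
    rw [Set.indicator_of_notMem hx, add_zero, hump, min_eq_left (by linarith), abs_le]
    rcases max_cases 0 (f x - 2 * η) with ⟨h, _⟩ | ⟨h, _⟩ <;> rw [h] <;> constructor <;> linarith

lemma uniformEquicontinuous_hump {ι : Type*} {f : ι → S → ℝ} (hf : UniformEquicontinuous f)
    (T : ι → Set S) : UniformEquicontinuous fun i => hump η δ (T i) (f i) := by
  have profile_uc : UniformContinuous fun p : ℝ × ℝ => max 0 (min (p.1 - 2 * η) (2 - p.2 / δ)) :=
    (LipschitzWith.id.const_max 0).uniformContinuous.comp
      (uniformContinuous_min.comp ((uniformContinuous_fst.sub uniformContinuous_const).prodMk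
        (uniformContinuous_const.sub (uniformContinuous_snd.div_const' δ))))
  exact uniformEquicontinuous_uniformContinuous_comp₂ profile_uc hf
    (uniformEquicontinuous_infDist T)

lemma hump_eq_zero_of_forall_lt {T' : Set S} (hT' : T'.Nonempty) (hf : ∀ t ∈ T', f t < η)
    (hδ : ∀ x y, dist x y < 2 * δ → dist (f x) (f y) < η) (hx : Metric.infDist x T' < 2 * δ) :
    hump η δ T f x = 0 := by
  obtain ⟨t, ht, hxt⟩ := (Metric.infDist_lt_iff hT').1 hx
  refine hump_eq_zero_of_le ?_
  linarith [hf t ht, (abs_lt.1 (hδ x t hxt)).2]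

end Humps

section GlidingHump

lemma exists_diagonal_tendsto_sub {a : ℕ → ℕ → ℝ} {b : ℕ → ℝ}
    (ha : ∀ n, Tendsto (a n) atTop (𝓝 (b n))) :
    ∃ p : ℕ → ℕ, Tendsto p atTop atTop ∧ Tendsto (fun n => a n (p n) - b n) atTop (𝓝 0) := by
  have exists_index (n : ℕ) : ∃ m ≥ n, |a n m - b n| < 1 / ((n : ℝ) + 1) :=
    ((eventually_ge_atTop n).and (Metric.tendsto_nhds.1 (ha n) _ Nat.one_div_pos_of_nat)).exists
  choose p hp hpab using exists_index
  exact ⟨p, tendsto_atTop_mono hp tendsto_id,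
    squeeze_zero_norm (fun n => (hpab n).le) tendsto_one_div_add_atTop_nhds_zero_nat⟩

lemma abs_iSup_sub_sum_range_le_indicator {X : Type*} {h : ℕ → X → ℝ}
    (h01 : ∀ j x, h j x ∈ Set.Icc 0 1) (hdisj : ∀ x, Pairwise fun i j => h i x = 0 ∨ h j x = 0)
    {n : ℕ} {B : Set X} (hB : ∀ j ≥ n, ∀ x ∉ B, h j x = 0) (x : X) :
    |(⨆ j, h j x) - ∑ j ∈ Finset.range n, h j x| ≤ B.indicator 1 x := by
  have indicator_nonneg : 0 ≤ B.indicator (1 : X → ℝ) x :=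
    Set.indicator_nonneg (fun _ _ => zero_le_one) x
  by_cases hzero : ∀ j, h j x = 0
  · simpa [hzero] using indicator_nonneg
  obtain ⟨i, hi⟩ := not_forall.1 hzero
  have eq_zero (j : ℕ) (hj : j ≠ i) : h j x = 0 := (hdisj x hj).resolve_right hi
  have iSup_eq : ⨆ j, h j x = h i x := by
    refine le_antisymm (ciSup_le fun j => ?_) (le_ciSup (f := fun j => h j x) ⟨1, ?_⟩ i)
    · rcases eq_or_ne j i with rfl | hj
      · rfl
      · exact (eq_zero j hj).trans_le (h01 i x).1
    · rintro _ ⟨j, rfl⟩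
      exact (h01 j x).2
  rw [iSup_eq]
  rcases lt_or_ge i n with hin | hni
  · rw [Finset.sum_eq_single_of_mem i (Finset.mem_range.2 hin) fun j _ => eq_zero j]
    simpa using indicator_nonneg
  · have hxB : x ∈ B := by_contra fun hxB => hi (hB i hni x hxB)
    rw [Finset.sum_eq_zero fun j hj => eq_zero j ((Finset.mem_range.1 hj).trans_le hni).ne,
      sub_zero, abs_of_nonneg (h01 i x).1, Set.indicator_of_mem hxB]
    exact (h01 i x).2

lemma abs_iSup_le_one {X : Type*} {h : ℕ → X → ℝ} (h01 : ∀ j x, h j x ∈ Set.Icc 0 1) (x : X) :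
    |⨆ j, h j x| ≤ 1 := by
  rw [abs_of_nonneg (Real.iSup_nonneg fun j => (h01 j x).1)]
  exact ciSup_le fun j => (h01 j x).2

lemma abs_pairing_le_of_disjoint_supports {X : Type*} [MeasurableSpace X] (σ : SignedMeasure X)
    {h : ℕ → X → ℝ} (hh : ∀ j, Measurable (h j)) (h01 : ∀ j x, h j x ∈ Set.Icc 0 1)
    (hdisj : ∀ x, Pairwise fun i j => h i x = 0 ∨ h j x = 0) {l : ℕ} {B : Set X}
    (hB : MeasurableSet B) (hzero : ∀ j > l, ∀ x ∉ B, h j x = 0) :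
    |pairing σ (h l)| ≤ |pairing σ fun x => ⨆ j, h j x|
      + ∑ j ∈ Finset.range l, |pairing σ (h j)| + σ.totalVariation.real B := by
  have h_int (j : ℕ) : Integrable (h j) σ.totalVariation :=
    integrable_of_measurable_of_abs_le (hh j) fun x =>
      (abs_of_nonneg (h01 j x).1).trans_le (h01 j x).2
  have iSup_int : Integrable (fun x => ⨆ j, h j x) σ.totalVariation :=
    integrable_of_measurable_of_abs_le (.iSup hh) (abs_iSup_le_one h01)
  have tail_le := abs_pairing_le_of_abs_le_add_indicator σ (a := 0) hB fun x => by
    simpa using abs_iSup_sub_sum_range_le_indicator h01 hdisj (n := l + 1) hzero x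
  rw [pairing_sub iSup_int (integrable_finsetSum _ fun j _ => h_int j),
    pairing_finset_sum _ fun j _ => h_int j, Finset.sum_range_succ] at tail_le
  have head_le := Finset.abs_sum_le_sum_abs (fun j => pairing σ (h j)) (Finset.range l)
  grind

variable {S : Type*} [PseudoMetricSpace S] [MeasurableSpace S]

/-- The sequence `μ n` converges to the functional `L` when tested against `U_b(S)`. -/
def TendstoUb (μ : ℕ → SignedMeasure S) (L : (S → ℝ) → ℝ) : Prop :=
  ∀ f : S → ℝ, UniformContinuous f → (∃ C, ∀ x, |f x| ≤ C) →
    Tendsto (fun n => pairing (μ n) f) atTop (𝓝 (L f))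

lemma TendstoUb.comp {μ : ℕ → SignedMeasure S} {L : (S → ℝ) → ℝ} (hμ : TendstoUb μ L) {φ : ℕ → ℕ}
    (hφ : Tendsto φ atTop atTop) : TendstoUb (μ ∘ φ) L :=
  fun f hf hbdd => (hμ f hf hbdd).comp hφ

lemma TendstoUb.exists_tvNorm_le [BorelSpace S] {μ : ℕ → SignedMeasure S} {L : (S → ℝ) → ℝ}
    (hμ : TendstoUb μ L) : ∃ M, ∀ n, tvNorm (μ n) ≤ M := by
  refine exists_tvNorm_le_of_pairing_bounded fun f hf hbdd => ?_
  obtain ⟨C, hC⟩ := (hμ f hf hbdd).norm.bddAbove_range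
  exact ⟨C, fun n => hC ⟨n, rfl⟩⟩

lemma eventually_abs_pairing_le_of_disjoint_supports [BorelSpace S] {σ : ℕ → SignedMeasure S}
    (hσ : TendstoUb σ 0) {h : ℕ → S → ℝ} (hh : UniformEquicontinuous h)
    (h01 : ∀ j x, h j x ∈ Set.Icc 0 1) (hdisj : ∀ x, Pairwise fun i j => h i x = 0 ∨ h j x = 0)
    {B : ℕ → Set S} (hB : ∀ l, MeasurableSet (B l)) (hzero : ∀ l, ∀ j > l, ∀ x ∉ B l, h j x = 0)
    {ρ : ℝ} (hρ : 0 < ρ) (hσB : ∀ l, (σ l).totalVariation.real (B l) ≤ ρ)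
    (hσh : ∀ l, ∀ j < l, |pairing (σ l) (h j)| ≤ ρ * (1 / 2) ^ j) :
    ∀ᶠ l in atTop, |pairing (σ l) (h l)| ≤ 4 * ρ := by
  have h_meas (j : ℕ) : Measurable (h j) := (hh.uniformContinuous j).continuous.measurable
  have iSup_uc : UniformContinuous fun x => ⨆ j, h j x :=
    uniformContinuous_iSup_of_uniformEquicontinuous hh fun x =>
      ⟨1, Set.forall_mem_range.2 fun j => (h01 j x).2⟩
  filter_upwards [Metric.tendsto_nhds.1 (hσ _ iSup_uc ⟨1, abs_iSup_le_one h01⟩) ρ hρ] with l hl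
  have sum_le : ∑ j ∈ Finset.range l, |pairing (σ l) (h j)| ≤ ρ * 2 :=
    calc ∑ j ∈ Finset.range l, |pairing (σ l) (h j)|
        ≤ ∑ j ∈ Finset.range l, ρ * (1 / 2) ^ j :=
          Finset.sum_le_sum fun j hj => hσh l j (Finset.mem_range.1 hj)
      _ ≤ ρ * 2 := by
          rw [← Finset.mul_sum]
          gcongr
          exact sum_geometric_two_le l
  rw [Pi.zero_apply, Real.dist_0_eq_abs] at hl
  linarith [abs_pairing_le_of_disjoint_supports (σ l) h_meas h01 hdisj (hB l) (hzero l), hσB l]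

lemma exists_finite_measureReal_lt_infDist_lt [TopologicalSpace.SeparableSpace S] [Nonempty S]
    [OpensMeasurableSpace S] (γ : Measure S) [IsFiniteMeasure γ] {δ ρ : ℝ} (hδ : 0 < δ)
    (hρ : 0 < ρ) :
    ∃ T : Set S, T.Finite ∧ T.Nonempty ∧ γ.real {x | δ < Metric.infDist x T} < ρ := by
  let u := TopologicalSpace.denseSeq S
  have tendsto_measure := tendstoInMeasure_iff_norm.1 (tendstoInMeasure_of_tendsto_ae
    (fun n => (Metric.continuous_infDist_pt (u '' Set.Iic n)).aestronglyMeasurable (μ := γ))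
    (.of_forall (tendsto_infDist_image_Iic (TopologicalSpace.denseRange_denseSeq S)))) δ hδ
  obtain ⟨n, hn⟩ := (tendsto_measure.eventually_lt_const (ENNReal.ofReal_pos.2 hρ)).exists
  refine ⟨u '' Set.Iic n, (Set.finite_Iic n).image u, Set.nonempty_Iic.image u, ?_⟩
  have subset : {x | δ < Metric.infDist x (u '' Set.Iic n)} ⊆
      {x | δ ≤ ‖Metric.infDist x (u '' Set.Iic n) - 0‖} := fun x hx => by
    rw [Set.mem_ofPred_eq, sub_zero, Real.norm_of_nonneg Metric.infDist_nonneg]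
    exact le_of_lt hx
  exact ENNReal.toReal_lt_of_lt_ofReal ((measure_mono subset).trans_lt hn)

lemma exists_strictMono_lt_and_abs_pairing_le {σ : ℕ → SignedMeasure S} (hσ : TendstoUb σ 0)
    {f : ℕ → S → ℝ} (hf : ∀ x, Tendsto (fun n => f n x) atTop (𝓝 0)) {T : ℕ → Set S}
    (hT : ∀ n, (T n).Finite) {h : ℕ → S → ℝ} (hh : ∀ n, UniformContinuous (h n)) {C : ℝ}
    (hC : ∀ n x, |h n x| ≤ C) {η ρ : ℝ} (hη : 0 < η) (hρ : 0 < ρ) :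
    ∃ φ : ℕ → ℕ, StrictMono φ ∧ ∀ j l, j < l → (∀ t ∈ T (φ j), f (φ l) t < η) ∧
      |pairing (σ (φ l)) (h (φ j))| ≤ ρ * (1 / 2) ^ j := by
  have eventually_rel (m : ℕ) : ∀ᶠ n in atTop, (∀ t ∈ T m, f n t < η) ∧
      |pairing (σ n) (h m)| < ρ * (1 / 2) ^ m := by
    refine ((hT m).eventually_all.2 fun t _ => (hf t).eventually_lt_const hη).and ?_
    simpa using Metric.tendsto_nhds.1 (hσ (h m) (hh m) ⟨C, hC m⟩) (ρ * (1 / 2) ^ m) (by positivity)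
  obtain ⟨_, basis⟩ := (atTop : Filter ℕ).exists_antitone_basis
  obtain ⟨φ, hφ, hrel, -⟩ := basis.subbasis_with_rel eventually_rel
  refine ⟨φ, hφ, fun j l hjl => ⟨(hrel hjl).1, (hrel hjl).2.le.trans ?_⟩⟩
  gcongr ρ * ?_
  exact pow_le_pow_of_le_one (by norm_num) (by norm_num) (hφ.id_le j)

variable [TopologicalSpace.SeparableSpace S] [BorelSpace S]

lemma exists_measureReal_lt_and_abs_pairing_hump_le [Nonempty S] {σ : ℕ → SignedMeasure S}
    (hσ : TendstoUb σ 0) {f : ℕ → S → ℝ} (hf : IsEquicontinuousNull f) {η δ ρ : ℝ} (hη : 0 < η)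
    (hδ : 0 < δ) (hρ : 0 < ρ) (hfδ : ∀ x y, dist x y < 2 * δ → ∀ n, dist (f n x) (f n y) < η) :
    ∃ k T, (σ k).totalVariation.real {x | δ < Metric.infDist x T} < ρ ∧
      |pairing (σ k) (hump η δ T (f k))| ≤ 4 * ρ := by
  choose T hT_fin hT_ne hσT using fun n =>
    exists_finite_measureReal_lt_infDist_lt (σ n).totalVariation hδ hρ
  let h (n : ℕ) : S → ℝ := hump η δ (T n) (f n)
  have hh : UniformEquicontinuous h := uniformEquicontinuous_hump hf.uniformEquicontinuous T
  have h01 (n : ℕ) (x : S) : h n x ∈ Set.Icc 0 1 := hump_mem_Icc hη.le (hf.mem_Icc n x).2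
  obtain ⟨φ, hφ, hsel⟩ := exists_strictMono_lt_and_abs_pairing_le hσ hf.tendsto hT_fin
    hh.uniformContinuous (fun n x => (abs_of_nonneg (h01 n x).1).trans_le (h01 n x).2) hη hρ
  have h_eq_zero {j l : ℕ} (hjl : j < l) {x : S} (hx : Metric.infDist x (T (φ j)) < 2 * δ) :
      h (φ l) x = 0 :=
    hump_eq_zero_of_forall_lt (hT_ne _) (hsel j l hjl).1 (fun x y hxy => hfδ x y hxy _) hx
  have disj_of_lt {j l : ℕ} (hjl : j < l) (x : S) : h (φ j) x = 0 ∨ h (φ l) x = 0 :=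
    (le_or_gt (2 * δ) (Metric.infDist x (T (φ j)))).imp (hump_eq_zero_of_le_infDist hδ)
      (h_eq_zero hjl)
  have h_disj (x : S) : Pairwise fun j l => h (φ j) x = 0 ∨ h (φ l) x = 0 := fun j l hjl =>
    hjl.lt_or_gt.elim (disj_of_lt · x) fun hlj => (disj_of_lt hlj x).symm
  obtain ⟨l, hl⟩ := (eventually_abs_pairing_le_of_disjoint_supports (hσ.comp hφ.tendsto_atTop)
    (hh.comp φ) (fun j => h01 (φ j)) h_disj
    (fun l => (isOpen_lt continuous_const
      (Metric.continuous_infDist_pt (T (φ l)))).measurableSet)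
    (fun l j hlj x hx => h_eq_zero hlj ((not_lt.1 hx).trans_lt (by linarith)))
    hρ (fun l => (hσT (φ l)).le) (fun l j hjl => (hsel j l hjl).2)).exists
  exact ⟨φ l, T (φ l), hσT (φ l), hl⟩

lemma exists_abs_pairing_lt [Nonempty S] {σ : ℕ → SignedMeasure S} (hσ : TendstoUb σ 0)
    {f : ℕ → S → ℝ} (hf : IsEquicontinuousNull f) {ε : ℝ} (hε : 0 < ε) :
    ∃ k, |pairing (σ k) (f k)| < ε := by
  obtain ⟨M, hM⟩ := hσ.exists_tvNorm_le
  obtain ⟨η, hη, hMη⟩ := exists_pos_mul_lt (show 0 < ε / 4 by positivity) (2 * M)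
  obtain ⟨r, hr, hfr⟩ := Metric.uniformEquicontinuous_iff.1 hf.uniformEquicontinuous η hη
  obtain ⟨δ, hδ, rfl⟩ : ∃ δ, 0 < δ ∧ 2 * δ = r := ⟨r / 2, half_pos hr, by ring⟩
  obtain ⟨k, T, hσT, hhump⟩ := exists_measureReal_lt_and_abs_pairing_hump_le hσ hf hη hδ
    (show 0 < ε / 8 by positivity) hfr
  have hump_meas : Measurable (hump η δ T (f k)) :=
    ((uniformEquicontinuous_hump hf.uniformEquicontinuous fun _ => T).uniformContinuous
      k).continuous.measurable
  have abs_hump_le (x : S) : |hump η δ T (f k) x| ≤ 1 := by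
    have h01 := hump_mem_Icc (δ := δ) (T := T) hη.le (hf.mem_Icc k x).2
    exact (abs_of_nonneg h01.1).trans_le h01.2
  have remainder_le := abs_pairing_le_of_abs_le_add_indicator (σ k)
    (isOpen_lt continuous_const (Metric.continuous_infDist_pt T)).measurableSet
    fun x => abs_sub_hump_le hη.le hδ (hf.mem_Icc k x)
  rw [pairing_sub (integrable_of_measurable_of_abs_le (hf.measurable k) (hf.abs_le_one k))
    (integrable_of_measurable_of_abs_le hump_meas abs_hump_le)] at remainder_le
  have hMk : 2 * η * tvNorm (σ k) ≤ 2 * η * M := by gcongr; exact hM k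
  refine ⟨k, ?_⟩
  linarith [abs_sub_abs_le_abs_sub (pairing (σ k) (f k)) (pairing (σ k) (hump η δ T (f k)))]

lemma tendsto_pairing_of_tendstoUb_zero [Nonempty S] {σ : ℕ → SignedMeasure S}
    (hσ : TendstoUb σ 0) {f : ℕ → S → ℝ} (hf : IsEquicontinuousNull f) :
    Tendsto (fun n => pairing (σ n) (f n)) atTop (𝓝 0) := by
  by_contra hnot
  obtain ⟨ε, hε, hfreq⟩ : ∃ ε > 0, ∃ᶠ n in atTop, ε ≤ |pairing (σ n) (f n)| := by
    simpa only [Metric.tendsto_nhds, Real.dist_0_eq_abs, not_forall, not_eventually, not_lt,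
      exists_prop] using hnot
  obtain ⟨φ, hφ, hεφ⟩ := extraction_of_frequently_atTop hfreq
  obtain ⟨k, hk⟩ :=
    exists_abs_pairing_lt (hσ.comp hφ.tendsto_atTop) (hf.comp hφ.tendsto_atTop) hε
  exact hk.not_ge (hεφ k)

lemma TendstoUb.tendsto_apply_of_isEquicontinuousNull [Nonempty S] {μ : ℕ → SignedMeasure S}
    {L : (S → ℝ) → ℝ} (hμ : TendstoUb μ L) {f : ℕ → S → ℝ} (hf : IsEquicontinuousNull f) :
    Tendsto (fun n => L (f n)) atTop (𝓝 0) := by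
  refine tendsto_of_subseq_tendsto fun ns hns => ?_
  have tendsto_pairing (n : ℕ) : Tendsto (fun m => pairing (μ n) (f (ns m))) atTop (𝓝 0) := by
    have h := tendsto_pairing_of_dominated_convergence (μ n) hf.measurable hf.abs_le_one hf.tendsto
    simpa [pairing, Function.comp_def] using h.comp hns
  obtain ⟨ms, hms, hμf⟩ := exists_diagonal_tendsto_sub tendsto_pairing
  obtain ⟨p, hp, hLf⟩ := exists_diagonal_tendsto_sub fun n =>
    hμ (f (ns (ms n))) (hf.uniformEquicontinuous.uniformContinuous _) ⟨1, hf.abs_le_one _⟩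
  have hσ : TendstoUb (fun n => μ (p n) - μ n) 0 := fun g hg ⟨C, hC⟩ => by
    have hLg := hμ g hg ⟨C, hC⟩
    simpa [pairing_sub_left _ _ hg.continuous.measurable hC] using (hLg.comp hp).sub hLg
  have schur : Tendsto (fun n => pairing (μ (p n) - μ n) (f (ns (ms n)))) atTop (𝓝 0) :=
    tendsto_pairing_of_tendstoUb_zero hσ (hf.comp (hns.comp hms))
  refine ⟨ms, ?_⟩
  have sum_tendsto := (schur.add hμf).sub hLf
  simp only [add_zero, sub_zero] at sum_tendsto
  refine sum_tendsto.congr fun n => ?_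
  rw [pairing_sub_left _ _ (hf.measurable _) (hf.abs_le_one _)]
  ring

end GlidingHump

section CompactLimit

variable {ι X K : Type*} [MeasurableSpace X] [TopologicalSpace K] [CompactSpace K] [T2Space K]
  [MeasurableSpace K] [BorelSpace K] {e : X → K}

lemma exists_finiteMeasure_tendsto_integral_comp (he : Measurable e) (U : Ultrafilter ι)
    {α : ι → Measure X} [∀ i, IsFiniteMeasure (α i)] {M : ℝ} (hM : ∀ i, (α i).real Set.univ ≤ M) :
    ∃ β : FiniteMeasure K, ∀ φ : K → ℝ, Continuous φ →
      Tendsto (fun i => ∫ x, φ (e x) ∂α i) U (𝓝 (∫ z, φ z ∂(β : Measure K))) := by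
  let A (i : ι) : FiniteMeasure K := ⟨(α i).map e, inferInstance⟩
  have mass_le (i : ι) : (A i).mass ≤ M.toNNReal := by
    have mass_eq : ((A i).mass : ℝ) = (α i).real Set.univ :=
      map_measureReal_apply he MeasurableSet.univ
    rw [← NNReal.coe_le_coe, mass_eq]
    exact (hM i).trans (Real.le_coe_toNNReal M)
  obtain ⟨β, -, hβ⟩ :=
    (isCompact_setOfPred_finiteMeasure_le_of_compactSpace K M.toNNReal).ultrafilter_le_nhds'
      (U.map A) (Filter.mem_map.2 (Filter.univ_mem' mass_le))
  refine ⟨β, fun φ hφ => ?_⟩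
  refine (FiniteMeasure.tendsto_iff_forall_integral_tendsto.1 (show Tendsto A U (𝓝 β) from hβ)
    (.mkOfCompact ⟨φ, hφ⟩)).congr fun i => ?_
  exact integral_map he.aemeasurable hφ.measurable.aestronglyMeasurable

lemma exists_signedMeasure_tendsto_pairing_comp (he : Measurable e) (U : Ultrafilter ι)
    {μ : ι → SignedMeasure X} {M : ℝ} (hM : ∀ i, tvNorm (μ i) ≤ M) :
    ∃ σ : SignedMeasure K, ∀ φ : K → ℝ, Continuous φ →
      Tendsto (fun i => pairing (μ i) (φ ∘ e)) U (𝓝 (pairing σ φ)) := by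
  have mass_add_le (i : ι) : (μ i).toJordanDecomposition.posPart.real Set.univ
      + (μ i).toJordanDecomposition.negPart.real Set.univ ≤ M := by
    rw [← measureReal_add_apply]
    exact hM i
  obtain ⟨β, hβ⟩ := exists_finiteMeasure_tendsto_integral_comp he U fun i =>
    (le_add_of_nonneg_right measureReal_nonneg).trans (mass_add_le i)
  obtain ⟨γ, hγ⟩ := exists_finiteMeasure_tendsto_integral_comp he U fun i =>
    (le_add_of_nonneg_left measureReal_nonneg).trans (mass_add_le i)
  refine ⟨(β : Measure K).toSignedMeasure - (γ : Measure K).toSignedMeasure, fun φ hφ => ?_⟩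
  rw [pairing_toSignedMeasure_sub _ _ hφ.measurable
    (BoundedContinuousFunction.mkOfCompact ⟨φ, hφ⟩).norm_coe_le_norm]
  exact (hβ φ hφ).sub (hγ φ hφ)

end CompactLimit

section StoneCechRange

lemma exists_continuous_stoneCech_extension {X : Type*} [TopologicalSpace X] {f : X → ℝ}
    (hf : Continuous f) {a b : ℝ} (hab : ∀ x, f x ∈ Set.Icc a b) :
    ∃ F : StoneCech X → ℝ, Continuous F ∧ (∀ z, F z ∈ Set.Icc a b) ∧
      ∀ x, F (stoneCechUnit x) = f x := by
  have hf' : Continuous fun x => (⟨f x, hab x⟩ : Set.Icc a b) := hf.subtype_mk hab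
  exact ⟨Subtype.val ∘ stoneCechExtend hf',
    continuous_subtype_val.comp (continuous_stoneCechExtend hf'),
    fun z => (stoneCechExtend hf' z).2,
    fun x => congrArg Subtype.val (stoneCechExtend_stoneCechUnit hf' x)⟩

lemma exists_le_nhds_of_forall_infDist_lt_mem {S : Type*} [PseudoMetricSpace S] [CompleteSpace S]
    {U : Ultrafilter S}
    (hU : ∀ ε > 0, ∃ T : Set S, T.Finite ∧ T.Nonempty ∧ {x | Metric.infDist x T < ε} ∈ U) :
    ∃ x, (U : Filter S) ≤ 𝓝 x := by
  refine CompleteSpace.complete (Metric.cauchy_iff.2 ⟨U.neBot, fun ε hε => ?_⟩)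
  obtain ⟨T, hT_fin, hT_ne, hTU⟩ := hU (ε / 2) (half_pos hε)
  have subset_biUnion : {x | Metric.infDist x T < ε / 2} ⊆ ⋃ t ∈ T, Metric.ball t (ε / 2) :=
    fun x hx => by simpa using (Metric.infDist_lt_iff hT_ne).1 hx
  obtain ⟨t, -, ht⟩ :=
    (Ultrafilter.finite_biUnion_mem_iff hT_fin).1 (mem_of_superset hTU subset_biUnion)
  exact ⟨_, ht, fun x hx y hy => (dist_triangle_right x y t).trans_lt
    ((add_lt_add hx hy).trans_eq (add_halves ε))⟩

variable (S : Type*) [PseudoMetricSpace S] [TopologicalSpace.SeparableSpace S] [Nonempty S]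

/-- The distance to the terms of index at most `m` of a dense sequence in `S`, truncated at `1` so
that it extends continuously to the Stone–Čech compactification. -/
noncomputable def truncDist (m : ℕ) (x : S) : ℝ :=
  min 1 (Metric.infDist x (TopologicalSpace.denseSeq S '' Set.Iic m))

lemma isEquicontinuousNull_truncDist : IsEquicontinuousNull (truncDist S) where
  uniformEquicontinuous := LipschitzWith.uniformEquicontinuous _ 1 fun _ =>
    (Metric.lipschitz_infDist_pt _).const_min 1
  mem_Icc _ _ := ⟨le_min zero_le_one Metric.infDist_nonneg, min_le_left _ _⟩
  tendsto x := by
    simpa [truncDist] using (tendsto_const_nhds (x := (1 : ℝ))).min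
      (tendsto_infDist_image_Iic (TopologicalSpace.denseRange_denseSeq S) x)

lemma antitone_truncDist : Antitone (truncDist S) := fun _ _ hmn _ =>
  min_le_min_left 1 (Metric.infDist_le_infDist_of_subset
    (Set.image_mono (Set.Iic_subset_Iic.2 hmn)) (Set.nonempty_Iic.image _))

lemma exists_truncDist_extension (m : ℕ) : ∃ F : StoneCech S → ℝ, Continuous F ∧
    (∀ z, F z ∈ Set.Icc 0 1) ∧ ∀ x, F (stoneCechUnit x) = truncDist S m x :=
  exists_continuous_stoneCech_extension
    ((isEquicontinuousNull_truncDist S).uniformEquicontinuous.uniformContinuous m).continuous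
    ((isEquicontinuousNull_truncDist S).mem_Icc m)

/-- The continuous extension of `truncDist S m` to the Stone–Čech compactification. As `m → ∞` these
functions detect the points outside `S`. -/
noncomputable def remoteness (m : ℕ) : StoneCech S → ℝ :=
  (exists_truncDist_extension S m).choose

lemma continuous_remoteness (m : ℕ) : Continuous (remoteness S m) :=
  (exists_truncDist_extension S m).choose_spec.1

variable {S}

lemma remoteness_mem_Icc (m : ℕ) (z : StoneCech S) : remoteness S m z ∈ Set.Icc 0 1 :=
  (exists_truncDist_extension S m).choose_spec.2.1 z

lemma remoteness_stoneCechUnit (m : ℕ) (x : S) :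
    remoteness S m (stoneCechUnit x) = truncDist S m x :=
  (exists_truncDist_extension S m).choose_spec.2.2 x

lemma antitone_remoteness (z : StoneCech S) : Antitone fun m => remoteness S m z := fun m n hmn =>
  isClosed_property denseRange_stoneCechUnit
    (isClosed_le (continuous_remoteness S n) (continuous_remoteness S m))
    (fun x => by simpa only [remoteness_stoneCechUnit] using antitone_truncDist S hmn x) z

lemma tendsto_remoteness (z : StoneCech S) :
    Tendsto (fun m => remoteness S m z) atTop (𝓝 (⨅ m, remoteness S m z)) :=
  tendsto_atTop_ciInf (antitone_remoteness z)
    ⟨0, Set.forall_mem_range.2 fun m => (remoteness_mem_Icc m z).1⟩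

lemma mem_range_stoneCechUnit_of_tendsto_remoteness [CompleteSpace S] {z : StoneCech S}
    (hz : Tendsto (fun m => remoteness S m z) atTop (𝓝 0)) :
    z ∈ Set.range (stoneCechUnit : S → StoneCech S) := by
  obtain ⟨U, hU⟩ := exists_ultrafilter_iff.2 (isDenseInducing_stoneCechUnit.comap_nhds_neBot z)
  have hUz : Tendsto stoneCechUnit (U : Filter S) (𝓝 z) := tendsto_iff_comap.2 hU
  obtain ⟨x, hx⟩ : ∃ x, (U : Filter S) ≤ 𝓝 x := by
    refine exists_le_nhds_of_forall_infDist_lt_mem fun ε hε => ?_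
    obtain ⟨m, hm⟩ := (hz.eventually_lt_const (lt_min hε zero_lt_one)).exists
    refine ⟨TopologicalSpace.denseSeq S '' Set.Iic m, (Set.finite_Iic m).image _,
      Set.nonempty_Iic.image _, ?_⟩
    filter_upwards [((continuous_remoteness S m).tendsto z).comp hUz |>.eventually_lt_const hm]
      with x hx
    rw [Function.comp_apply, remoteness_stoneCechUnit, truncDist] at hx
    grind
  exact ⟨x, tendsto_nhds_unique ((continuous_stoneCechUnit.tendsto x).mono_left hx) hUz⟩

lemma mem_range_stoneCechUnit_iff_iInf_remoteness_eq_zero [CompleteSpace S] {z : StoneCech S} :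
    z ∈ Set.range (stoneCechUnit : S → StoneCech S) ↔ ⨅ m, remoteness S m z = 0 := by
  refine ⟨?_, fun hz => mem_range_stoneCechUnit_of_tendsto_remoteness (hz ▸ tendsto_remoteness z)⟩
  rintro ⟨x, rfl⟩
  refine tendsto_nhds_unique (tendsto_remoteness _) ?_
  simpa only [remoteness_stoneCechUnit] using (isEquicontinuousNull_truncDist S).tendsto x

variable [MeasurableSpace (StoneCech S)] [BorelSpace (StoneCech S)]

lemma measurable_iInf_remoteness : Measurable fun z : StoneCech S => ⨅ m, remoteness S m z :=
  .iInf fun m => (continuous_remoteness S m).measurable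

lemma measurableSet_range_stoneCechUnit [CompleteSpace S] :
    MeasurableSet (Set.range (stoneCechUnit : S → StoneCech S)) := by
  have range_eq : Set.range (stoneCechUnit : S → StoneCech S) =
      (fun z => ⨅ m, remoteness S m z) ⁻¹' {0} :=
    Set.ext fun z => mem_range_stoneCechUnit_iff_iInf_remoteness_eq_zero
  rw [range_eq]
  exact measurable_iInf_remoteness (measurableSet_singleton 0)

end StoneCechRange

section Concentration

lemma abs_min_mul_le_one {a b c : ℝ} (ha : a ∈ Set.Icc 0 1) (hb : 0 ≤ b) (hc : 0 ≤ c) :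
    |min a (c * b)| ≤ 1 := by
  rw [abs_of_nonneg (le_min ha.1 (mul_nonneg hc hb))]
  exact (min_le_left _ _).trans ha.2

lemma tendsto_min_natCast_mul (a : ℝ) {b : ℝ} (hb : 0 < b) :
    Tendsto (fun k : ℕ => min a (k * b)) atTop (𝓝 a) := by
  refine tendsto_const_nhds.congr' ?_
  filter_upwards [(tendsto_natCast_atTop_atTop.atTop_mul_const hb).eventually_ge_atTop a] with k hk
  exact (min_eq_left hk).symm

variable {S : Type*} [PseudoMetricSpace S] [TopologicalSpace.SeparableSpace S] [Nonempty S]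

lemma isEquicontinuousNull_min_mul_truncDist {f : S → ℝ} (hf : UniformContinuous f)
    (hf01 : ∀ x, f x ∈ Set.Icc 0 1) {c : ℝ} (hc : 0 ≤ c) :
    IsEquicontinuousNull fun m x => min (f x) (c * truncDist S m x) where
  uniformEquicontinuous := by
    have const_ue : UniformEquicontinuous fun _ : ℕ => f :=
      ((uniformEquicontinuous_unique (F := fun _ : Unit => f)).2 hf).comp fun _ => ()
    have min_uc : UniformContinuous fun p : ℝ × ℝ => min p.1 (c * p.2) :=
      uniformContinuous_min.comp
        (uniformContinuous_fst.prodMk (uniformContinuous_snd.const_mul' c))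
    exact uniformEquicontinuous_uniformContinuous_comp₂ min_uc
      const_ue
      (isEquicontinuousNull_truncDist S).uniformEquicontinuous
  mem_Icc m x := ⟨le_min (hf01 x).1
    (mul_nonneg hc ((isEquicontinuousNull_truncDist S).mem_Icc m x).1),
    (min_le_left _ _).trans (hf01 x).2⟩
  tendsto x := by
    have h := (tendsto_const_nhds (x := f x)).min
      (((isEquicontinuousNull_truncDist S).tendsto x).const_mul c)
    rwa [mul_zero, min_eq_right (hf01 x).1] at h

lemma tendsto_sub_min_mul_iInf_remoteness [CompleteSpace S] {φ : StoneCech S → ℝ}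
    {z : StoneCech S} (hφ : 0 ≤ φ z) :
    Tendsto (fun k : ℕ => φ z - min (φ z) (k * ⨅ m, remoteness S m z)) atTop
      (𝓝 ((Set.range (stoneCechUnit : S → StoneCech S)).indicator φ z)) := by
  by_cases hz : z ∈ Set.range (stoneCechUnit : S → StoneCech S)
  · rw [Set.indicator_of_mem hz, mem_range_stoneCechUnit_iff_iInf_remoteness_eq_zero.1 hz]
    simp only [mul_zero, min_eq_right hφ, sub_zero, tendsto_const_nhds]
  · have iInf_pos : 0 < ⨅ m, remoteness S m z :=
      (Real.iInf_nonneg fun m => (remoteness_mem_Icc m z).1).lt_of_ne' fun h =>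
        hz (mem_range_stoneCechUnit_iff_iInf_remoteness_eq_zero.2 h)
    rw [Set.indicator_of_notMem hz, ← sub_self (φ z)]
    exact tendsto_const_nhds.sub (tendsto_min_natCast_mul (φ z) iInf_pos)

variable [MeasurableSpace (StoneCech S)] [BorelSpace (StoneCech S)]
  {σ : SignedMeasure (StoneCech S)} {φ : StoneCech S → ℝ}

lemma pairing_min_mul_iInf_remoteness_eq_zero (hφ : Measurable φ)
    (hφ01 : ∀ z, φ z ∈ Set.Icc 0 1) {c : ℝ} (hc : 0 ≤ c)
    (hσ : Tendsto (fun m => pairing σ fun z => min (φ z) (c * remoteness S m z)) atTop (𝓝 0)) :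
    pairing σ (fun z => min (φ z) (c * ⨅ m, remoteness S m z)) = 0 :=
  tendsto_nhds_unique (tendsto_pairing_of_dominated_convergence σ
    (fun m => hφ.min ((continuous_remoteness S m).measurable.const_mul c))
    (fun m z => abs_min_mul_le_one (hφ01 z) (remoteness_mem_Icc m z).1 hc)
    fun z => tendsto_const_nhds.min ((tendsto_remoteness z).const_mul c)) hσ

lemma pairing_indicator_range_stoneCechUnit [CompleteSpace S] (hφ : Measurable φ)
    (hφ01 : ∀ z, φ z ∈ Set.Icc 0 1)
    (hσ : ∀ c ≥ 0, Tendsto (fun m => pairing σ fun z => min (φ z) (c * remoteness S m z)) atTop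
      (𝓝 0)) :
    pairing σ ((Set.range (stoneCechUnit : S → StoneCech S)).indicator φ) = pairing σ φ := by
  let G (k : ℕ) (z : StoneCech S) : ℝ := min (φ z) (k * ⨅ m, remoteness S m z)
  have hG (k : ℕ) : Measurable (G k) := hφ.min (measurable_iInf_remoteness.const_mul _)
  have abs_φ_le (z : StoneCech S) : |φ z| ≤ 1 := (abs_of_nonneg (hφ01 z).1).trans_le (hφ01 z).2
  have abs_G_le (k : ℕ) (z : StoneCech S) : |G k z| ≤ 1 := abs_min_mul_le_one (hφ01 z)
    (Real.iInf_nonneg fun m => (remoteness_mem_Icc m z).1) k.cast_nonneg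
  have pairing_sub_G (k : ℕ) : pairing σ (fun z => φ z - G k z) = pairing σ φ := by
    rw [pairing_sub (integrable_of_measurable_of_abs_le hφ abs_φ_le)
      (integrable_of_measurable_of_abs_le (hG k) (abs_G_le k)),
      pairing_min_mul_iInf_remoteness_eq_zero hφ hφ01 k.cast_nonneg (hσ k k.cast_nonneg), sub_zero]
  refine tendsto_nhds_unique (tendsto_pairing_of_dominated_convergence σ
    (fun k => hφ.sub (hG k))
    (fun k z => (abs_sub _ _).trans (add_le_add (abs_φ_le z) (abs_G_le k z)))
    fun z => tendsto_sub_min_mul_iInf_remoteness (hφ01 z).1) ?_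
  exact tendsto_const_nhds.congr fun k => (pairing_sub_G k).symm

end Concentration

section Representation

lemma tendstoUb_pairing_of_forall_mem_Icc {S : Type*} [PseudoMetricSpace S] [MeasurableSpace S]
    [OpensMeasurableSpace S] {μ : ℕ → SignedMeasure S} {ν : SignedMeasure S}
    (h : ∀ g : S → ℝ, UniformContinuous g → (∀ x, g x ∈ Set.Icc 0 1) →
      Tendsto (fun n => pairing (μ n) g) atTop (𝓝 (pairing ν g))) :
    TendstoUb μ (pairing ν) := by
  rintro f hf ⟨B, hB⟩
  obtain ⟨C, hC_pos, hC⟩ : ∃ C > 0, ∀ x, |f x| ≤ C :=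
    ⟨max B 1, by positivity, fun x => (hB x).trans (le_max_left _ _)⟩
  let g (x : S) : ℝ := (f x + C) / (2 * C)
  have hg : UniformContinuous g := (hf.add uniformContinuous_const).div_const' _
  have hg01 (x : S) : g x ∈ Set.Icc 0 1 := by
    obtain ⟨hf_ge, hf_le⟩ := abs_le.1 (hC x)
    exact ⟨div_nonneg (by linarith) (by positivity), (div_le_one (by positivity)).2 (by linarith)⟩
  have f_eq : f = fun x => 2 * C * g x - C * 1 := by
    ext x
    simp only [g]
    field_simp
    ring
  have pairing_f (κ : SignedMeasure S) :
      pairing κ f = 2 * C * pairing κ g - C * pairing κ fun _ => 1 := by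
    have g_int : Integrable g κ.totalVariation := integrable_of_measurable_of_abs_le
      hg.continuous.measurable fun x => (abs_of_nonneg (hg01 x).1).trans_le (hg01 x).2
    rw [f_eq, pairing_sub (g_int.const_mul _) (integrable_const _), pairing_const_mul,
      pairing_const_mul]
  simp only [pairing_f]
  exact ((h g hg hg01).const_mul _).sub
    ((h _ uniformContinuous_const fun _ => ⟨zero_le_one, le_rfl⟩).const_mul _)

lemma TendstoUb.exists_tendstoUb_pairing {S : Type*} [MetricSpace S] [CompleteSpace S]
    [TopologicalSpace.SeparableSpace S] [Nonempty S] [MeasurableSpace S] [BorelSpace S]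
    {μ : ℕ → SignedMeasure S} {L : (S → ℝ) → ℝ} (hμ : TendstoUb μ L) :
    ∃ ν : SignedMeasure S, TendstoUb μ (pairing ν) := by
  let : MeasurableSpace (StoneCech S) := borel _
  have : BorelSpace (StoneCech S) := ⟨rfl⟩
  have unit_emb : MeasurableEmbedding (stoneCechUnit : S → StoneCech S) :=
    isEmbedding_stoneCechUnit.measurableEmbedding measurableSet_range_stoneCechUnit
  obtain ⟨M, hM⟩ := hμ.exists_tvNorm_le
  obtain ⟨σ, hσ⟩ :=
    exists_signedMeasure_tendsto_pairing_comp unit_emb.measurable (hyperfilter ℕ) hM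
  obtain ⟨ν, hν⟩ := exists_pairing_comp_eq_pairing_indicator_range unit_emb σ
  have L_eq {φ : StoneCech S → ℝ} (hφ : Continuous φ) {f : S → ℝ} (hφf : φ ∘ stoneCechUnit = f)
      (hf : UniformContinuous f) (hf1 : ∀ x, |f x| ≤ 1) : L f = pairing σ φ :=
    tendsto_nhds_unique ((hμ f hf ⟨1, hf1⟩).mono_left Nat.hyperfilter_le_atTop) (hφf ▸ hσ φ hφ)
  refine ⟨ν, tendstoUb_pairing_of_forall_mem_Icc fun g hg hg01 => ?_⟩
  obtain ⟨φ, hφ, hφ01, hφg⟩ := exists_continuous_stoneCech_extension hg.continuous hg01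
  have abs_φ_le (z : StoneCech S) : |φ z| ≤ 1 := (abs_of_nonneg (hφ01 z).1).trans_le (hφ01 z).2
  have abs_g_le (x : S) : |g x| ≤ 1 := hφg x ▸ abs_φ_le _
  have pairing_tendsto (c : ℝ) (hc : 0 ≤ c) :
      Tendsto (fun m => pairing σ fun z => min (φ z) (c * remoteness S m z)) atTop (𝓝 0) := by
    have hnull := isEquicontinuousNull_min_mul_truncDist hg hg01 hc
    refine (hμ.tendsto_apply_of_isEquicontinuousNull hnull).congr fun m =>
      L_eq (hφ.min ((continuous_remoteness S m).const_mul c)) ?_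
        (hnull.uniformEquicontinuous.uniformContinuous m) (hnull.abs_le_one m)
    ext x
    simp only [Function.comp_apply, hφg, remoteness_stoneCechUnit]
  have pairing_ν : pairing ν g = L g := by
    rw [L_eq hφ (funext hφg) hg abs_g_le, ← funext hφg]
    exact (hν φ 1 hφ.measurable abs_φ_le).trans
      (pairing_indicator_range_stoneCechUnit hφ.measurable hφ01 pairing_tendsto)
  exact pairing_ν ▸ hμ g hg ⟨1, abs_g_le⟩

end Representation

/-- **`U_b(S)`-weak sequential completeness of `M(S)`.** If `(μ_n)` is a sequence of finite
signed Borel measures on a complete separable metric space such that `⟨μ_n, f⟩` is Cauchy for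
every bounded uniformly continuous `f : S → ℝ`, then there is a finite signed Borel measure `μ`
with `⟨μ_n, f⟩ → ⟨μ, f⟩` for every bounded uniformly continuous `f`. -/
theorem Ub_weakly_sequentially_complete {S : Type*} [MetricSpace S] [CompleteSpace S]
    [TopologicalSpace.SeparableSpace S] [MeasurableSpace S] [BorelSpace S]
    (μ : ℕ → SignedMeasure S)
    (hcauchy : ∀ f : S → ℝ, UniformContinuous f → (∃ C : ℝ, ∀ x, |f x| ≤ C) →
      CauchySeq (fun n => pairing (μ n) f)) :
    ∃ ν : SignedMeasure S, ∀ f : S → ℝ, UniformContinuous f → (∃ C : ℝ, ∀ x, |f x| ≤ C) →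
      Tendsto (fun n => pairing (μ n) f) atTop (𝓝 (pairing ν f)) := by
  rcases isEmpty_or_nonempty S with _ | _
  · exact ⟨0, fun f _ _ => by simp [pairing, Measure.eq_zero_of_isEmpty]⟩
  · have tendstoUb_limUnder : TendstoUb μ fun f => limUnder atTop fun n => pairing (μ n) f :=
      fun f hf hbdd => (hcauchy f hf hbdd).tendsto_limUnder
    exact tendstoUb_limUnder.exists_tendstoUb_pairing
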